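/- arXiv:2106.05327 — 6 statements merged into one kernel-verified Lean document; each statement's English description precedes it below -/
import Mathlib

section
/- Let ω, η, α : ℝ → ℝ with η and α twice differentiable, η''(t) + ω(t)² η(t) = 0 for all t, α''(t) + ω(t)² α(t) = 1/α(t)³ for all t, and α(t) ≠ 0 for all t. Then the Ermakov–Lewis invariant I(t) = (1/2)·[(η'(t)·α(t) − η(t)·α'(t))² + (η(t)/α(t))²] is constant, i.e. I(t) = I(0) for all t ∈ ℝ. -/
/-- The Ermakov–Lewis invariant
`I(t) = (1/2)·[(η'(t)·α(t) − η(t)·α'(t))² + (η(t)/α(t))²]`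
is constant along solutions of the linear oscillator and Ermakov–Pinney equations. -/
theorem ermakov_lewis_invariant_constant
    (ω η α : ℝ → ℝ)
    (hη : Differentiable ℝ η) (hη' : Differentiable ℝ (deriv η))
    (hα : Differentiable ℝ α) (hα' : Differentiable ℝ (deriv α))
    (hαne : ∀ t, α t ≠ 0)
    (hηeq : ∀ t, deriv (deriv η) t + (ω t) ^ 2 * η t = 0)
    (hαeq : ∀ t, deriv (deriv α) t + (ω t) ^ 2 * α t = 1 / (α t) ^ 3) :
    ∀ t : ℝ,
      (1 / 2) * ((deriv η t * α t - η t * deriv α t) ^ 2 + (η t / α t) ^ 2)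
        = (1 / 2) * ((deriv η 0 * α 0 - η 0 * deriv α 0) ^ 2 + (η 0 / α 0) ^ 2) := by
  have key : ∀ t, HasDerivAt (fun t => (1 / 2 : ℝ) *
      ((deriv η t * α t - η t * deriv α t) ^ 2 + (η t / α t) ^ 2)) 0 t := by
    intro t
    have h1 := (hη t).hasDerivAt
    have h2 := (hη' t).hasDerivAt
    have h3 := (hα t).hasDerivAt
    have h4 := (hα' t).hasDerivAt
    have h := ((((h2.mul h3).sub (h1.mul h4)).pow 2).add
      ((h1.div h3 (hαne t)).pow 2)).const_mul (1 / 2 : ℝ)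
    have e1 : deriv (deriv η) t = -((ω t) ^ 2 * η t) := by linarith [hηeq t]
    have e2 : deriv (deriv α) t = 1 / (α t) ^ 3 - (ω t) ^ 2 * α t := by linarith [hαeq t]
    have hne := hαne t
    refine h.congr_deriv ?_
    simp only [Pi.mul_apply, Pi.sub_apply, Pi.div_apply]
    rw [e1, e2]
    norm_num only [Nat.cast_ofNat, pow_one]
    field_simp
    ring
  intro t
  exact is_const_of_deriv_eq_zero (fun x => (key x).differentiableAt)
    (fun x => (key x).deriv) t 0
end

section
/- Pinney's superposition theorem: let ω, u, v : ℝ → ℝ with u and v twice differentiable, u''(t) + ω(t)² u(t) = 0 and v''(t) + ω(t)² v(t) = 0 for all t, and suppose the Wronskian u(t)·v'(t) − u'(t)·v(t) equals a constant W ≠ 0 for all t. Let A, B, C ∈ ℝ with A > 0 and A·C − B² = 1/W². Then for every t one has A·u(t)² + 2B·u(t)·v(t) + C·v(t)² > 0, and the function x(t) = sqrt(A·u(t)² + 2B·u(t)·v(t) + C·v(t)²) is twice differentiable and satisfies x''(t) + ω(t)² x(t) = 1/x(t)³ for all t. -/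
/-- Pinney's superposition theorem: if `u, v` solve the linear oscillator equation with
constant nonzero Wronskian `W`, and `A > 0`, `A·C − B² = 1/W²`, then
`x = sqrt(A·u² + 2B·u·v + C·v²)` is positive under the square root, twice differentiable,
and solves the Ermakov–Pinney equation. -/
theorem pinney_superposition
    (ω u v : ℝ → ℝ)
    (hu : Differentiable ℝ u) (hu' : Differentiable ℝ (deriv u))
    (hv : Differentiable ℝ v) (hv' : Differentiable ℝ (deriv v))
    (hueq : ∀ t, deriv (deriv u) t + (ω t) ^ 2 * u t = 0)
    (hveq : ∀ t, deriv (deriv v) t + (ω t) ^ 2 * v t = 0)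
    (W : ℝ) (hW : W ≠ 0)
    (hWr : ∀ t, u t * deriv v t - deriv u t * v t = W)
    (A B C : ℝ) (hA : 0 < A) (hABC : A * C - B ^ 2 = 1 / W ^ 2) :
    (∀ t, 0 < A * (u t) ^ 2 + 2 * B * u t * v t + C * (v t) ^ 2) ∧
      (Differentiable ℝ
          (fun t => Real.sqrt (A * (u t) ^ 2 + 2 * B * u t * v t + C * (v t) ^ 2)) ∧
        Differentiable ℝ
          (deriv (fun t => Real.sqrt (A * (u t) ^ 2 + 2 * B * u t * v t + C * (v t) ^ 2)))) ∧
      ∀ t,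
        deriv (deriv (fun t => Real.sqrt (A * (u t) ^ 2 + 2 * B * u t * v t + C * (v t) ^ 2))) t
            + (ω t) ^ 2 * Real.sqrt (A * (u t) ^ 2 + 2 * B * u t * v t + C * (v t) ^ 2)
          = 1 / (Real.sqrt (A * (u t) ^ 2 + 2 * B * u t * v t + C * (v t) ^ 2)) ^ 3 := by
  have hD : (A * C - B ^ 2) * W ^ 2 = 1 := by rw [hABC]; field_simp
  have hDpos : 0 < A * C - B ^ 2 := by rw [hABC]; positivity
  have hpos : ∀ t, 0 < A * (u t) ^ 2 + 2 * B * u t * v t + C * (v t) ^ 2 := by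
    intro t
    have key : A * (A * (u t) ^ 2 + 2 * B * u t * v t + C * (v t) ^ 2)
        = (A * u t + B * v t) ^ 2 + (A * C - B ^ 2) * (v t) ^ 2 := by ring
    refine pos_of_mul_pos_right (a := A) ?_ hA.le
    rw [key]
    by_cases h : v t = 0
    · have hu0 : u t ≠ 0 := by
        intro h0
        apply hW
        rw [← hWr t, h, h0]; ring
      rw [h]
      have := hA.ne'
      have h2 : 0 < (A * u t) ^ 2 := by positivity
      nlinarith
    · have : 0 < (A * C - B ^ 2) * (v t) ^ 2 := by positivity
      nlinarith [sq_nonneg (A * u t + B * v t)]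
  set x : ℝ → ℝ :=
    fun t => Real.sqrt (A * (u t) ^ 2 + 2 * B * u t * v t + C * (v t) ^ 2) with hx
  have hxpos : ∀ t, 0 < x t := fun t => Real.sqrt_pos.2 (hpos t)
  have hxsq : ∀ t, x t ^ 2 = A * (u t) ^ 2 + 2 * B * u t * v t + C * (v t) ^ 2 :=
    fun t => Real.sq_sqrt (hpos t).le
  have d1 : ∀ t, HasDerivAt x ((A * u t * deriv u t + B * (deriv u t * v t + u t * deriv v t)
      + C * v t * deriv v t) / x t) t := by
    intro t
    have h1 := (hu t).hasDerivAt
    have h2 := (hv t).hasDerivAt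
    have h := ((((h1.pow 2).const_mul A).add ((h1.const_mul (2 * B)).mul h2)).add
      ((h2.pow 2).const_mul C)).sqrt (hpos t).ne'
    refine h.congr_deriv ?_
    have := (hxpos t).ne'
    change _ / (2 * x t) = _
    field_simp
    simp
    ring
  have e1 : deriv x = fun t => (A * u t * deriv u t + B * (deriv u t * v t + u t * deriv v t)
      + C * v t * deriv v t) / x t := funext fun t => (d1 t).deriv
  have d2 : ∀ t, HasDerivAt (deriv x) (1 / x t ^ 3 - ω t ^ 2 * x t) t := by
    intro t
    have h1 := (hu t).hasDerivAt
    have h2 := (hv t).hasDerivAt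
    have h3 := (hu' t).hasDerivAt
    have h4 := (hv' t).hasDerivAt
    have h := (((((h1.const_mul A).mul h3).add (((h3.mul h2).add (h1.mul h4)).const_mul B)).add
      ((h2.const_mul C).mul h4))).div (d1 t) (hxpos t).ne'
    rw [e1]
    refine h.congr_deriv ?_
    have hx0 := (hxpos t).ne'
    have e3 : deriv (deriv u) t = -(ω t ^ 2 * u t) := by linarith [hueq t]
    have e4 : deriv (deriv v) t = -(ω t ^ 2 * v t) := by linarith [hveq t]
    have hq := hxsq t
    have hw := hWr t
    rw [← hw] at hD
    simp only [Pi.add_apply, Pi.mul_apply]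
    rw [e3, e4]
    generalize x t = X at *
    generalize deriv u t = a at *
    generalize deriv v t = b at *
    generalize u t = p at *
    generalize v t = q at *
    generalize ω t = w at *
    have hX4 : X ^ 4 = (A * p ^ 2 + 2 * B * p * q + C * q ^ 2) ^ 2 := by rw [← hq]; ring
    field_simp
    rw [hX4, hq, ← hD]
    ring
  refine ⟨hpos, ⟨fun t => (d1 t).differentiableAt, fun t => (d2 t).differentiableAt⟩, ?_⟩
  intro t
  rw [(d2 t).deriv]
  change _ + ω t ^ 2 * x t = 1 / x t ^ 3
  ring
end

section
/- Let ω, η₁, η₂ : ℝ → ℝ with η₁ and η₂ twice differentiable, η₁''(t) + ω(t)² η₁(t) = 0 and η₂''(t) + ω(t)² η₂(t) = 0 for all t, and suppose the Wronskian η₁(t)·η₂'(t) − η₁'(t)·η₂(t) = 1 for all t. Fix real numbers α₀ > 0 and d₀. Then the quantity (d₀² + 1/α₀²)·η₁(t)² + α₀²·η₂(t)² + 2·d₀·α₀·η₁(t)·η₂(t) is strictly positive for every t, and the function α(t) = sqrt((d₀² + 1/α₀²)·η₁(t)² + α₀²·η₂(t)² + 2·d₀·α₀·η₁(t)·η₂(t))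 satisfies the Ermakov–Pinney equation α''(t) + ω(t)² α(t) = 1/α(t)³ for all t. -/
/-- The wave-packet width `α(t) = sqrt((d₀² + 1/α₀²)·η₁² + α₀²·η₂² + 2·d₀·α₀·η₁·η₂)`
built from two oscillator solutions with unit Wronskian is well defined (positive radicand)
and solves the Ermakov–Pinney equation. -/
theorem wave_packet_width_solves_ermakov_pinney
    (ω η₁ η₂ : ℝ → ℝ)
    (hη₁ : Differentiable ℝ η₁) (hη₁' : Differentiable ℝ (deriv η₁))
    (hη₂ : Differentiable ℝ η₂) (hη₂' : Differentiable ℝ (deriv η₂))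
    (h₁eq : ∀ t, deriv (deriv η₁) t + (ω t) ^ 2 * η₁ t = 0)
    (h₂eq : ∀ t, deriv (deriv η₂) t + (ω t) ^ 2 * η₂ t = 0)
    (hWr : ∀ t, η₁ t * deriv η₂ t - deriv η₁ t * η₂ t = 1)
    (α₀ d₀ : ℝ) (hα₀ : 0 < α₀) :
    (∀ t, 0 < (d₀ ^ 2 + 1 / α₀ ^ 2) * (η₁ t) ^ 2 + α₀ ^ 2 * (η₂ t) ^ 2
        + 2 * d₀ * α₀ * η₁ t * η₂ t) ∧
      ∀ t,
        deriv (deriv (fun t => Real.sqrt ((d₀ ^ 2 + 1 / α₀ ^ 2) * (η₁ t) ^ 2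
              + α₀ ^ 2 * (η₂ t) ^ 2 + 2 * d₀ * α₀ * η₁ t * η₂ t))) t
            + (ω t) ^ 2 * Real.sqrt ((d₀ ^ 2 + 1 / α₀ ^ 2) * (η₁ t) ^ 2
              + α₀ ^ 2 * (η₂ t) ^ 2 + 2 * d₀ * α₀ * η₁ t * η₂ t)
          = 1 / (Real.sqrt ((d₀ ^ 2 + 1 / α₀ ^ 2) * (η₁ t) ^ 2
              + α₀ ^ 2 * (η₂ t) ^ 2 + 2 * d₀ * α₀ * η₁ t * η₂ t)) ^ 3 := by
  obtain ⟨A, hA⟩ : ∃ A, A = d₀ ^ 2 + 1 / α₀ ^ 2 := ⟨_, rfl⟩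
  have hdet : A * α₀ ^ 2 - (d₀ * α₀) ^ 2 = 1 := by
    rw [hA]; field_simp; ring
  have hpos : ∀ t, 0 < A * (η₁ t) ^ 2 + α₀ ^ 2 * (η₂ t) ^ 2 + 2 * d₀ * α₀ * η₁ t * η₂ t := by
    intro t
    have e : α₀ ^ 2 * (A * (η₁ t) ^ 2 + α₀ ^ 2 * (η₂ t) ^ 2 + 2 * d₀ * α₀ * η₁ t * η₂ t)
        = (α₀ ^ 2 * η₂ t + d₀ * α₀ * η₁ t) ^ 2 + (η₁ t) ^ 2 := by
      linear_combination (η₁ t) ^ 2 * hdet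
    have h2 : 0 < α₀ ^ 2 := by positivity
    refine pos_of_mul_pos_right (a := α₀ ^ 2) ?_ h2.le
    rw [e]
    by_cases h : η₁ t = 0
    · have hy : η₂ t ≠ 0 := by
        intro h'
        have := hWr t
        simp [h, h'] at this
      rw [h]
      have : α₀ ^ 2 * η₂ t ≠ 0 := mul_ne_zero h2.ne' hy
      simp only [mul_zero, add_zero]
      positivity
    · positivity
  rw [← hA]
  refine ⟨hpos, ?_⟩
  have dQ : ∀ t, HasDerivAt (fun t => A * (η₁ t) ^ 2 + α₀ ^ 2 * (η₂ t) ^ 2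
      + 2 * d₀ * α₀ * η₁ t * η₂ t)
      (2 * (A * η₁ t * deriv η₁ t + α₀ ^ 2 * η₂ t * deriv η₂ t
        + d₀ * α₀ * (deriv η₁ t * η₂ t + η₁ t * deriv η₂ t))) t := by
    intro t
    have a := (hη₁ t).hasDerivAt
    have b := (hη₂ t).hasDerivAt
    convert! (((a.pow 2).const_mul A).add ((b.pow 2).const_mul (α₀ ^ 2))).add
      ((a.const_mul (2 * d₀ * α₀)).mul b) using 1
    simp; ring
  have dP : ∀ t, HasDerivAt (fun t => A * η₁ t * deriv η₁ t + α₀ ^ 2 * η₂ t * deriv η₂ t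
        + d₀ * α₀ * (deriv η₁ t * η₂ t + η₁ t * deriv η₂ t))
      (A * (deriv η₁ t) ^ 2 + α₀ ^ 2 * (deriv η₂ t) ^ 2
        + 2 * d₀ * α₀ * deriv η₁ t * deriv η₂ t
        - (ω t) ^ 2 * (A * (η₁ t) ^ 2 + α₀ ^ 2 * (η₂ t) ^ 2
      + 2 * d₀ * α₀ * η₁ t * η₂ t)) t := by
    intro t
    have a := (hη₁ t).hasDerivAt
    have b := (hη₂ t).hasDerivAt
    have a' := (hη₁' t).hasDerivAt
    have b' := (hη₂' t).hasDerivAt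
    rw [show deriv (deriv η₁) t = -((ω t) ^ 2 * η₁ t) by linarith [h₁eq t]] at a'
    rw [show deriv (deriv η₂) t = -((ω t) ^ 2 * η₂ t) by linarith [h₂eq t]] at b'
    convert! (((a.const_mul A).mul a').add ((b.const_mul (α₀ ^ 2)).mul b')).add
      (((a'.mul b).add (a.mul b')).const_mul (d₀ * α₀)) using 1
    ring
  have key : ∀ t, (A * (deriv η₁ t) ^ 2 + α₀ ^ 2 * (deriv η₂ t) ^ 2
        + 2 * d₀ * α₀ * deriv η₁ t * deriv η₂ t) * (A * (η₁ t) ^ 2 + α₀ ^ 2 * (η₂ t) ^ 2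
      + 2 * d₀ * α₀ * η₁ t * η₂ t) - (A * η₁ t * deriv η₁ t + α₀ ^ 2 * η₂ t * deriv η₂ t
        + d₀ * α₀ * (deriv η₁ t * η₂ t + η₁ t * deriv η₂ t)) ^ 2 = 1 := by
    intro t
    linear_combination (η₁ t * deriv η₂ t - deriv η₁ t * η₂ t) ^ 2 * hdet
      + (η₁ t * deriv η₂ t - deriv η₁ t * η₂ t + 1) * hWr t
  generalize hQ : (fun t => A * (η₁ t) ^ 2 + α₀ ^ 2 * (η₂ t) ^ 2
      + 2 * d₀ * α₀ * η₁ t * η₂ t) = Q at dQ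
  have hQ' : ∀ t, A * (η₁ t) ^ 2 + α₀ ^ 2 * (η₂ t) ^ 2
      + 2 * d₀ * α₀ * η₁ t * η₂ t = Q t := fun t => by rw [← hQ]
  generalize hP : (fun t => A * η₁ t * deriv η₁ t + α₀ ^ 2 * η₂ t * deriv η₂ t
        + d₀ * α₀ * (deriv η₁ t * η₂ t + η₁ t * deriv η₂ t)) = P at dP
  have hP' : ∀ t, A * η₁ t * deriv η₁ t + α₀ ^ 2 * η₂ t * deriv η₂ t
        + d₀ * α₀ * (deriv η₁ t * η₂ t + η₁ t * deriv η₂ t) = P t := fun t => by rw [← hP]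
  simp only [hQ', hP'] at *
  have dS : ∀ t, HasDerivAt (fun t => √(Q t)) (P t / √(Q t)) t := by
    intro t
    convert! (dQ t).sqrt (hpos t).ne' using 1
    rw [mul_div_mul_left _ _ two_ne_zero]
  have e1 : deriv (fun t => √(Q t)) = fun t => P t / √(Q t) := funext fun t => (dS t).deriv
  intro t
  have hs : 0 < √(Q t) := Real.sqrt_pos.2 (hpos t)
  have hsq : √(Q t) ^ 2 = Q t := Real.sq_sqrt (hpos t).le
  rw [e1, ((dP t).fun_div (dS t) hs.ne').deriv]
  have k := key t
  rw [← hsq] at k ⊢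
  rw [Real.sqrt_sq hs.le]
  generalize √(Q t) = s at *
  field_simp
  linear_combination k
end

section
/- Let ω : ℝ → ℝ be differentiable and let α : ℝ → ℝ be twice differentiable with α(t) ≠ 0 for all t and α''(t) + ω(t)² α(t) = 1/α(t)³ for all t. Then w(t) = α(t)² is three times differentiable and satisfies the third-order linear equation of maximal symmetry w'''(t) + 4·ω(t)²·w'(t) + 4·ω(t)·ω'(t)·w(t) = 0 for all t. -/
/-- If `α` solves the Ermakov–Pinney equation with differentiable frequency `ω` and never
vanishes, then `w = α²` solves the third-order linear equation of maximal symmetry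
`w''' + 4ω²w' + 4ωω'w = 0`. -/
theorem sq_of_ermakov_pinney_solves_maximal_symmetry
    (ω α : ℝ → ℝ)
    (hω : Differentiable ℝ ω)
    (hα : Differentiable ℝ α) (hα' : Differentiable ℝ (deriv α))
    (hαne : ∀ t, α t ≠ 0)
    (hαeq : ∀ t, deriv (deriv α) t + (ω t) ^ 2 * α t = 1 / (α t) ^ 3) :
    (Differentiable ℝ (fun t => (α t) ^ 2) ∧
        Differentiable ℝ (deriv (fun t => (α t) ^ 2)) ∧
        Differentiable ℝ (deriv (deriv (fun t => (α t) ^ 2)))) ∧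
      ∀ t,
        deriv (deriv (deriv (fun t => (α t) ^ 2))) t
            + 4 * (ω t) ^ 2 * deriv (fun t => (α t) ^ 2) t
            + 4 * ω t * deriv ω t * (α t) ^ 2 = 0 := by
  have a1 : ∀ t, HasDerivAt α (deriv α t) t := fun t => (hα t).hasDerivAt
  have a2 : ∀ t, HasDerivAt (deriv α) (deriv (deriv α) t) t := fun t => (hα' t).hasDerivAt
  have o1 : ∀ t, HasDerivAt ω (deriv ω t) t := fun t => (hω t).hasDerivAt
  have h1 : ∀ t, HasDerivAt (fun t => (α t) ^ 2) (2 * (α t * deriv α t)) t := by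
    intro t
    refine ((a1 t).fun_pow 2).congr_deriv ?_
    push_cast
    ring
  have e1 : deriv (fun t => (α t) ^ 2) = fun t => 2 * (α t * deriv α t) :=
    funext fun t => (h1 t).deriv
  have h2 : ∀ t, HasDerivAt (fun t => 2 * (α t * deriv α t))
      (2 * (deriv α t) ^ 2 + 2 * (((α t) ^ 2)⁻¹ - (ω t) ^ 2 * (α t) ^ 2)) t := by
    intro t
    refine (((a1 t).fun_mul (a2 t)).const_mul 2).congr_deriv ?_
    have h := hαeq t
    have hn := hαne t
    have h' : deriv (deriv α) t = 1 / (α t) ^ 3 - (ω t) ^ 2 * α t := by linarith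
    rw [h']
    field_simp
    try ring
  have e2 : deriv (fun t => 2 * (α t * deriv α t)) = fun t =>
      2 * (deriv α t) ^ 2 + 2 * (((α t) ^ 2)⁻¹ - (ω t) ^ 2 * (α t) ^ 2) :=
    funext fun t => (h2 t).deriv
  have h3 : ∀ t, HasDerivAt (fun t =>
      2 * (deriv α t) ^ 2 + 2 * (((α t) ^ 2)⁻¹ - (ω t) ^ 2 * (α t) ^ 2))
      (-(8 * (ω t) ^ 2 * (α t * deriv α t)) - 4 * ω t * deriv ω t * (α t) ^ 2) t := by
    intro t
    have hn := hαne t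
    refine ((((a2 t).fun_pow 2).const_mul 2).fun_add
      ((((h1 t).fun_inv (pow_ne_zero 2 hn)).fun_sub
        (((o1 t).fun_pow 2).fun_mul (h1 t))).const_mul 2)).congr_deriv ?_
    have h' : deriv (deriv α) t = 1 / (α t) ^ 3 - (ω t) ^ 2 * α t := by
      linarith [hαeq t]
    rw [h']
    push_cast
    field_simp
    try ring
  rw [e1, e2]
  refine ⟨⟨fun t => (h1 t).differentiableAt, fun t => (h2 t).differentiableAt,
    fun t => (h3 t).differentiableAt⟩, fun t => ?_⟩
  rw [(h3 t).deriv]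
  ring
end

section
/- Let ω : ℝ → ℝ be differentiable and let η : ℝ → ℝ be twice differentiable with η''(t) + ω(t)² η(t) = 0 for all t. Then w(t) = η(t)² is three times differentiable and satisfies the third-order linear equation of maximal symmetry w'''(t) + 4·ω(t)²·w'(t) + 4·ω(t)·ω'(t)·w(t) = 0 for all t. -/
/-- If `η` solves the linear oscillator equation with differentiable frequency `ω`, then
`w = η²` solves the third-order linear equation of maximal symmetry
`w''' + 4ω²w' + 4ωω'w = 0`. -/
theorem sq_of_oscillator_solves_maximal_symmetry
    (ω η : ℝ → ℝ)
    (hω : Differentiable ℝ ω)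
    (hη : Differentiable ℝ η) (hη' : Differentiable ℝ (deriv η))
    (hηeq : ∀ t, deriv (deriv η) t + (ω t) ^ 2 * η t = 0) :
    (Differentiable ℝ (fun t => (η t) ^ 2) ∧
        Differentiable ℝ (deriv (fun t => (η t) ^ 2)) ∧
        Differentiable ℝ (deriv (deriv (fun t => (η t) ^ 2)))) ∧
      ∀ t,
        deriv (deriv (deriv (fun t => (η t) ^ 2))) t
            + 4 * (ω t) ^ 2 * deriv (fun t => (η t) ^ 2) t
            + 4 * ω t * deriv ω t * (η t) ^ 2 = 0 := by
  have e2 : ∀ t, deriv (deriv η) t = -((ω t) ^ 2 * η t) := fun t => by linarith [hηeq t]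
  have h1 : deriv (fun t => (η t) ^ 2) = fun t => 2 * (η t * deriv η t) := by
    funext t
    have h := (hη t).hasDerivAt.fun_pow 2
    rw [h.deriv]
    norm_num
    ring
  have h2 : deriv (fun t => 2 * (η t * deriv η t))
      = fun t => 2 * (deriv η t ^ 2 - (ω t) ^ 2 * η t ^ 2) := by
    funext t
    have h := (((hη t).hasDerivAt.fun_mul (hη' t).hasDerivAt)).const_mul 2
    rw [h.deriv, e2]
    ring
  have h3 : ∀ t, deriv (fun t => 2 * (deriv η t ^ 2 - (ω t) ^ 2 * η t ^ 2)) t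
      = -8 * (ω t) ^ 2 * η t * deriv η t - 4 * ω t * deriv ω t * η t ^ 2 := by
    intro t
    have h := (((hη' t).hasDerivAt.fun_pow 2).fun_sub
      (((hω t).hasDerivAt.fun_pow 2).fun_mul ((hη t).hasDerivAt.fun_pow 2))).const_mul 2
    rw [h.deriv, e2]
    norm_num
    ring
  rw [h1, h2]
  refine ⟨⟨by fun_prop, by fun_prop, by fun_prop⟩, fun t => ?_⟩
  rw [h3]
  ring
end

section
/- Riccati-to-Ermakov reduction: let ω : ℝ → ℝ and let Q : ℝ → ℂ be differentiable with Q'(t) + Q(t)² + ω(t)² = 0 for all t (where ω(t)² is viewed as a complex number) and Im Q(t) > 0 for all t. Then the function α(t) = (Im Q(t))^(−1/2) is real-valued, strictly positive and twice differentiable, satisfies Re Q(t) = α'(t)/α(t) for all t, and satisfies the Ermakov–Pinney equation α''(t) + ω(t)² α(t) = 1/α(t)³ for all t. -/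
open Complex in
/-- Riccati-to-Ermakov reduction: if `Q : ℝ → ℂ` solves the complex Riccati equation
`Q' + Q² + ω² = 0` with `Im Q > 0`, then `α = (Im Q)^(−1/2)` is positive,
twice differentiable, satisfies `Re Q = α'/α`, and solves the Ermakov–Pinney equation. -/
theorem riccati_to_ermakov_pinney
    (ω : ℝ → ℝ) (Q : ℝ → ℂ)
    (hQ : Differentiable ℝ Q)
    (hQeq : ∀ t, deriv Q t + (Q t) ^ 2 + ((ω t : ℂ)) ^ 2 = 0)
    (hIm : ∀ t, 0 < (Q t).im) :
    (∀ t, 0 < ((Q t).im) ^ (-(1 / 2 : ℝ))) ∧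
      (Differentiable ℝ (fun t => ((Q t).im) ^ (-(1 / 2 : ℝ))) ∧
        Differentiable ℝ (deriv (fun t => ((Q t).im) ^ (-(1 / 2 : ℝ))))) ∧
      (∀ t, (Q t).re
          = deriv (fun t => ((Q t).im) ^ (-(1 / 2 : ℝ))) t / ((Q t).im) ^ (-(1 / 2 : ℝ))) ∧
      ∀ t,
        deriv (deriv (fun t => ((Q t).im) ^ (-(1 / 2 : ℝ)))) t
            + (ω t) ^ 2 * ((Q t).im) ^ (-(1 / 2 : ℝ))
          = 1 / (((Q t).im) ^ (-(1 / 2 : ℝ))) ^ 3 := by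
  have hre : ∀ t, HasDerivAt (fun t => (Q t).re) ((Q t).im ^ 2 - (Q t).re ^ 2 - ω t ^ 2) t := by
    intro t
    have h := (Complex.reCLM.hasFDerivAt (x := Q t)).comp_hasDerivAt t (hQ t).hasDerivAt
    have e := congrArg Complex.re (hQeq t)
    simp [pow_two] at e
    refine HasDerivAt.congr_deriv (f' := (deriv Q t).re) h ?_
    linarith
  have him : ∀ t, HasDerivAt (fun t => (Q t).im) (-2 * (Q t).re * (Q t).im) t := by
    intro t
    have h := (Complex.imCLM.hasFDerivAt (x := Q t)).comp_hasDerivAt t (hQ t).hasDerivAt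
    have e := congrArg Complex.im (hQeq t)
    simp [pow_two] at e
    refine HasDerivAt.congr_deriv (f' := (deriv Q t).im) h ?_
    linarith
  have hpos : ∀ t, 0 < ((Q t).im) ^ (-(1 / 2 : ℝ)) := fun t => Real.rpow_pos_of_pos (hIm t) _
  have ha : ∀ t, HasDerivAt (fun t => ((Q t).im) ^ (-(1 / 2 : ℝ)))
      ((Q t).re * ((Q t).im) ^ (-(1 / 2 : ℝ))) t := by
    intro t
    refine ((him t).rpow_const (p := -(1 / 2 : ℝ)) (Or.inl (hIm t).ne')).congr_deriv ?_
    rw [Real.rpow_sub_one (hIm t).ne']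
    have := (hIm t).ne'
    field_simp
  have hd : deriv (fun t => ((Q t).im) ^ (-(1 / 2 : ℝ)))
      = fun t => (Q t).re * ((Q t).im) ^ (-(1 / 2 : ℝ)) := funext fun t => (ha t).deriv
  have hdd := fun t => (hre t).fun_mul (ha t)
  refine ⟨hpos, ⟨fun t => (ha t).differentiableAt, ?_⟩, ?_, ?_⟩
  · rw [hd]
    exact fun t => (hdd t).differentiableAt
  · intro t
    rw [hd]
    have := (hpos t).ne'
    field_simp
  · intro t
    rw [hd, (hdd t).deriv]
    have h4 : (((Q t).im) ^ (-(1 / 2 : ℝ))) ^ 2 * (Q t).im = 1 := by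
      rw [← Real.rpow_natCast, ← Real.rpow_mul (hIm t).le]
      norm_num
      rw [Real.rpow_neg_one]
      exact inv_mul_cancel₀ (hIm t).ne'
    have hp := hpos t
    generalize ((Q t).im) ^ (-(1 / 2 : ℝ)) = a at *
    rw [eq_div_iff (by positivity)]
    linear_combination (a ^ 2 * (Q t).im + 1) * h4
end
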